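/- Let Δ be a real matrix with spectral norm ‖Δ‖ < 1. Then the spectral norm of Δ(I + ΔᵀΔ)⁻¹ equals ‖Δ‖/(1 + ‖Δ‖²). -/

import Mathlib

open Matrix

/-- The spectral (operator 2-)norm of a real matrix. -/
noncomputable def specNorm {m n : ℕ} (A : Matrix (Fin m) (Fin n) ℝ) : ℝ :=
  ‖LinearMap.toContinuousLinearMap (Matrix.toEuclideanLin A)‖

/-!
Write `T` for `Δ` as an operator and `G = 1 + T† ∘L T`, so that `‖G‖ ≤ 1 + ‖T‖ ^ 2`. The lower bound
comes from `T = (T ∘L G⁻¹) ∘L G`. For the upper bound, let `t = ‖T‖ ≤ 1`, `a = ‖y‖` and `b = ‖T y‖`.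
Since `b ≤ t * a` and `t * b ≤ a`, the product `(t * a - b) * (a - t * b)` is nonnegative, that is
`(1 + t ^ 2) * (a * b) ≤ t * (a ^ 2 + b ^ 2)`. As `a ^ 2 + b ^ 2 = re ⟪G y, y⟫ ≤ ‖G y‖ * a`, this
gives `(1 + t ^ 2) * ‖T y‖ ≤ t * ‖G y‖`, and every vector is of the form `G y`.
-/

open ContinuousLinearMap
open scoped InnerProduct InnerProductSpace Ring

theorem map_ringInverse {M N G : Type*} [MonoidWithZero M] [MonoidWithZero N] [EquivLike G M N]
    [MulEquivClass G M N] (e : G) (a : M) : e a⁻¹ʳ = (e a)⁻¹ʳ := by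
  by_cases ha : IsUnit a
  · rw [← mul_one (e a)⁻¹ʳ, eq_comm, Ring.inverse_mul_eq_iff_eq_mul _ _ _ (ha.map e), ← map_mul,
      Ring.mul_inverse_cancel a ha, map_one]
  · rw [Ring.inverse_non_unit a ha, map_zero, Ring.inverse_non_unit _ (by simpa using ha)]

section HilbertSpace

variable {𝕜 E F : Type*} [RCLike 𝕜]
  [NormedAddCommGroup E] [InnerProductSpace 𝕜 E] [CompleteSpace E]
  [NormedAddCommGroup F] [InnerProductSpace 𝕜 F] [CompleteSpace F]

theorem re_inner_one_add_adjoint_comp_self_apply_self (T : E →L[𝕜] F) (x : E) :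
    RCLike.re ⟪(1 + T† ∘L T) x, x⟫_𝕜 = ‖x‖ ^ 2 + ‖T x‖ ^ 2 := by
  rw [_root_.add_apply, one_apply_eq_self, inner_add_left, map_add, inner_self_eq_norm_sq,
    ← apply_norm_sq_eq_inner_adjoint_left]

theorem isUnit_one_add_adjoint_comp_self (T : E →L[𝕜] F) : IsUnit (1 + T† ∘L T) :=
  isUnit_of_forall_le_norm_inner_map _ zero_lt_one fun x ↦ calc
    ‖x‖ ^ 2 * (1 : NNReal) ≤ ‖x‖ ^ 2 + ‖T x‖ ^ 2 := by simp
    _ = RCLike.re ⟪(1 + T† ∘L T) x, x⟫_𝕜 :=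
      (re_inner_one_add_adjoint_comp_self_apply_self T x).symm
    _ ≤ ‖⟪(1 + T† ∘L T) x, x⟫_𝕜‖ := RCLike.re_le_norm _

theorem norm_one_add_adjoint_comp_self_le (T : E →L[𝕜] F) :
    ‖1 + T† ∘L T‖ ≤ 1 + ‖T‖ ^ 2 :=
  calc
    ‖1 + T† ∘L T‖ ≤ ‖(1 : E →L[𝕜] E)‖ + ‖T† ∘L T‖ := norm_add_le _ _
    _ ≤ 1 + ‖T‖ ^ 2 := by
      rw [norm_adjoint_comp_self, ← sq]
      gcongr
      exact norm_id_le

theorem norm_div_le_norm_comp_inverse_one_add_adjoint_comp_self (T : E →L[𝕜] F) :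
    ‖T‖ / (1 + ‖T‖ ^ 2) ≤ ‖T ∘L (1 + T† ∘L T)⁻¹ʳ‖ := by
  rw [div_le_iff₀ (by positivity)]
  calc
    ‖T‖ = ‖(T ∘L (1 + T† ∘L T)⁻¹ʳ) ∘L (1 + T† ∘L T)‖ := by
      rw [comp_assoc, ← mul_def, Ring.inverse_mul_cancel _ (isUnit_one_add_adjoint_comp_self T),
        one_def, comp_id]
    _ ≤ ‖T ∘L (1 + T† ∘L T)⁻¹ʳ‖ * ‖1 + T† ∘L T‖ := opNorm_comp_le _ _
    _ ≤ ‖T ∘L (1 + T† ∘L T)⁻¹ʳ‖ * (1 + ‖T‖ ^ 2) := by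
      gcongr
      exact norm_one_add_adjoint_comp_self_le T

theorem one_add_norm_sq_mul_norm_apply_le {T : E →L[𝕜] F} (hT : ‖T‖ ≤ 1) (y : E) :
    (1 + ‖T‖ ^ 2) * ‖T y‖ ≤ ‖T‖ * ‖(1 + T† ∘L T) y‖ := by
  rcases eq_or_ne y 0 with rfl | hy
  · simp
  have h_apply_le : ‖T y‖ ≤ ‖T‖ * ‖y‖ := T.le_opNorm y
  have h_mul_apply_le : ‖T‖ * ‖T y‖ ≤ ‖y‖ := calc
    ‖T‖ * ‖T y‖ ≤ ‖T y‖ := mul_le_of_le_one_left (norm_nonneg _) hT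
    _ ≤ ‖y‖ := by simpa using T.le_of_opNorm_le hT y
  have h_sq_add_sq_le : ‖y‖ ^ 2 + ‖T y‖ ^ 2 ≤ ‖(1 + T† ∘L T) y‖ * ‖y‖ := by
    rw [← re_inner_one_add_adjoint_comp_self_apply_self]
    exact re_inner_le_norm _ _
  refine le_of_mul_le_mul_right ?_ (norm_pos_iff.mpr hy)
  calc
    (1 + ‖T‖ ^ 2) * ‖T y‖ * ‖y‖
      = ‖T‖ * (‖y‖ ^ 2 + ‖T y‖ ^ 2) - (‖T‖ * ‖y‖ - ‖T y‖) * (‖y‖ - ‖T‖ * ‖T y‖) := by ring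
    _ ≤ ‖T‖ * (‖y‖ ^ 2 + ‖T y‖ ^ 2) :=
      sub_le_self _ (mul_nonneg (sub_nonneg.mpr h_apply_le) (sub_nonneg.mpr h_mul_apply_le))
    _ ≤ ‖T‖ * (‖(1 + T† ∘L T) y‖ * ‖y‖) := by gcongr
    _ = ‖T‖ * ‖(1 + T† ∘L T) y‖ * ‖y‖ := (mul_assoc _ _ _).symm

theorem norm_comp_inverse_one_add_adjoint_comp_self_le {T : E →L[𝕜] F} (hT : ‖T‖ ≤ 1) :
    ‖T ∘L (1 + T† ∘L T)⁻¹ʳ‖ ≤ ‖T‖ / (1 + ‖T‖ ^ 2) := by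
  refine opNorm_le_bound _ (by positivity) fun x ↦ ?_
  have h_right_inv : (1 + T† ∘L T) ((1 + T† ∘L T)⁻¹ʳ x) = x := by
    rw [← mul_apply_eq_comp, Ring.mul_inverse_cancel _ (isUnit_one_add_adjoint_comp_self T),
      one_apply_eq_self]
  rw [ContinuousLinearMap.comp_apply, div_mul_eq_mul_div, le_div_iff₀' (by positivity)]
  simpa only [h_right_inv] using one_add_norm_sq_mul_norm_apply_le hT ((1 + T† ∘L T)⁻¹ʳ x)

theorem specNorm_mul_inv_one_add_eq_general {T : E →L[𝕜] F} (hT : ‖T‖ ≤ 1) :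
    ‖T ∘L (1 + T† ∘L T)⁻¹ʳ‖ = ‖T‖ / (1 + ‖T‖ ^ 2) :=
  (norm_comp_inverse_one_add_adjoint_comp_self_le hT).antisymm
    (norm_div_le_norm_comp_inverse_one_add_adjoint_comp_self T)

end HilbertSpace

section EuclideanSpace

variable {𝕜 m n : Type*} [RCLike 𝕜] [Fintype m] [Fintype n] [DecidableEq n]

theorem toContinuousLinearMap_toEuclideanLin_mul {l : Type*} [Fintype l] [DecidableEq l]
    (A : Matrix m n 𝕜) (B : Matrix n l 𝕜) :
    LinearMap.toContinuousLinearMap (toEuclideanLin (A * B)) =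
      LinearMap.toContinuousLinearMap (toEuclideanLin A) ∘L
        LinearMap.toContinuousLinearMap (toEuclideanLin B) := by
  rw [toEuclideanLin, toLpLin_mul 2 2 2]
  rfl

theorem toEuclideanCLM_conjTranspose_mul_self (A : Matrix m n 𝕜) :
    toEuclideanCLM (𝕜 := 𝕜) (Aᴴ * A) =
      (LinearMap.toContinuousLinearMap (toEuclideanLin A))† ∘L
        LinearMap.toContinuousLinearMap (toEuclideanLin A) := by
  classical
  rw [← LinearMap.adjoint_toContinuousLinearMap, ← toEuclideanLin_conjTranspose_eq_adjoint]
  exact toContinuousLinearMap_toEuclideanLin_mul Aᴴ A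

theorem toContinuousLinearMap_toEuclideanLin_mul_inv_one_add (A : Matrix m n 𝕜) :
    LinearMap.toContinuousLinearMap (toEuclideanLin (A * (1 + Aᴴ * A)⁻¹)) =
      LinearMap.toContinuousLinearMap (toEuclideanLin A) ∘L
        (1 + (LinearMap.toContinuousLinearMap (toEuclideanLin A))† ∘L
          LinearMap.toContinuousLinearMap (toEuclideanLin A))⁻¹ʳ := by
  rw [← toEuclideanCLM_conjTranspose_mul_self, ← map_one (toEuclideanCLM (n := n) (𝕜 := 𝕜)),
    ← map_add, ← map_ringInverse, ← nonsing_inv_eq_ringInverse]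
  exact toContinuousLinearMap_toEuclideanLin_mul A _

end EuclideanSpace

/-- If ‖Δ‖ < 1 then ‖Δ(I + ΔᵀΔ)⁻¹‖ = ‖Δ‖/(1 + ‖Δ‖²). -/
theorem specNorm_mul_inv_one_add_eq {p q : ℕ} (Δ : Matrix (Fin p) (Fin q) ℝ)
    (h : specNorm Δ < 1) :
    specNorm (Δ * (1 + Δᵀ * Δ)⁻¹) = specNorm Δ / (1 + specNorm Δ ^ 2) := by
  rw [specNorm, ← conjTranspose_eq_transpose_of_trivial,
    toContinuousLinearMap_toEuclideanLin_mul_inv_one_add]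
  exact specNorm_mul_inv_one_add_eq_general h.le
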